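/- (No hypercyclicity.) Let a > 0 be real and b ∈ ℂ with Re(b) ≥ 0, and let φ(w) = a·w + b, an affine self-map of ℂ₊. Then the composition operator C_φ is not hypercyclic on H²(ℂ₊): there is no f ∈ H²(ℂ₊) whose orbit {f ∘ φ^[n] : n ∈ ℕ} is itself dense in H²(ℂ₊), i.e. for every f ∈ H²(ℂ₊) there exist g ∈ H²(ℂ₊) and ε > 0 such that ‖g − f ∘ φ^[n]‖ ≥ ε for every n ∈ ℕ. -/

import Mathlib

open Complex MeasureTheory

/-- The square of the `H²(ℂ₊)` norm: `sup_{x>0} ∫ |f(x+iy)|² dy`, valued in `ℝ≥0∞`. -/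
noncomputable def H2normSq (f : ℂ → ℂ) : ENNReal :=
  ⨆ x ∈ Set.Ioi (0 : ℝ), ∫⁻ y : ℝ, (‖f ((x : ℂ) + (y : ℂ) * Complex.I)‖₊ : ENNReal) ^ 2

/-- Membership in the Hardy space `H²(ℂ₊)` of the right half-plane. -/
def MemH2 (f : ℂ → ℂ) : Prop :=
  DifferentiableOn ℂ f {w : ℂ | 0 < w.re} ∧ H2normSq f < ⊤

/-!
Composition with `φ w = a w + b` multiplies the squared norm by at most `a⁻¹`. If `1 ≤ a`, every
orbit is therefore bounded, hence not dense. If `a < 1`, then `φ` has a fixed point `p` in the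
closed half-plane, and translating `p` to the origin turns `φ` into the dilation by `a`, which
multiplies the squared norm by exactly `a⁻¹ > 1`. So the norms along the orbit are bounded below by
the norm of `f` on `{re w > re p}`; if that is zero, then `f` and its whole orbit vanish.
-/

/-- The family `F` is not dense in `H²(ℂ₊)`: some `g ∈ H²(ℂ₊)` has positive distance to it. -/
def NotDenseInH2 {ι : Type*} (F : ι → ℂ → ℂ) : Prop :=
  ∃ g : ℂ → ℂ, MemH2 g ∧ ∃ ε : ℝ, 0 < ε ∧ ∀ i, ENNReal.ofReal ε ^ 2 ≤ H2normSq (g - F i)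

/-- The squared `L²` norm of `f` on the vertical line `{re w = x}`; `H2normSq f` is its supremum
over `0 < x`. -/
noncomputable def lineNormSq (f : ℂ → ℂ) (x : ℝ) : ENNReal :=
  ∫⁻ y : ℝ, ‖f (x + y * I)‖ₑ ^ 2

section Norm

variable {f g : ℂ → ℂ} {x : ℝ}

lemma lineNormSq_le_H2normSq (f : ℂ → ℂ) (hx : 0 < x) : lineNormSq f x ≤ H2normSq f :=
  le_iSup₂ (f := fun (x : ℝ) (_ : x ∈ Set.Ioi (0 : ℝ)) => lineNormSq f x) x hx

lemma H2normSq_le_iff {C : ENNReal} :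
    H2normSq f ≤ C ↔ ∀ x : ℝ, 0 < x → lineNormSq f x ≤ C :=
  iSup₂_le_iff

lemma continuous_comp_verticalLine (hf : ContinuousOn f {w | 0 < w.re}) (hx : 0 < x) :
    Continuous fun y : ℝ => f (x + y * I) :=
  hf.comp_continuous (by fun_prop) fun y => by simpa using hx

lemma H2normSq_zero_sub (f : ℂ → ℂ) : H2normSq (0 - f) = H2normSq f := by
  simp [H2normSq]

lemma H2normSq_const_smul (c : ℂ) (f : ℂ → ℂ) : H2normSq (c • f) = ‖c‖ₑ ^ 2 * H2normSq f := by
  have line (x : ℝ) : lineNormSq (c • f) x = ‖c‖ₑ ^ 2 * lineNormSq f x := by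
    simp only [lineNormSq, Pi.smul_apply, enorm_smul, mul_pow]
    exact lintegral_const_mul' _ _ (by finiteness)
  calc H2normSq (c • f) = ⨆ x ∈ Set.Ioi (0 : ℝ), lineNormSq (c • f) x := rfl
    _ = ‖c‖ₑ ^ 2 * ⨆ x ∈ Set.Ioi (0 : ℝ), lineNormSq f x := by
      simp only [line, ENNReal.mul_iSup]

lemma enorm_sq_le_two_mul_enorm_sub_sq_add {E : Type*} [SeminormedAddCommGroup E] (u v : E) :
    ‖u‖ₑ ^ 2 ≤ 2 * ‖u - v‖ₑ ^ 2 + 2 * ‖v‖ₑ ^ 2 := by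
  have triangle : ‖u‖₊ ≤ ‖u - v‖₊ + ‖v‖₊ := by simpa using nnnorm_add_le (u - v) v
  have : ‖u‖₊ ^ 2 ≤ 2 * (‖u - v‖₊ ^ 2 + ‖v‖₊ ^ 2) := (pow_le_pow_left' triangle 2).trans add_sq_le
  rw [mul_add] at this
  simpa only [enorm_eq_nnnorm, ENNReal.coe_pow, ENNReal.coe_mul, ENNReal.coe_add, ENNReal.coe_ofNat]
    using ENNReal.coe_le_coe.2 this

lemma H2normSq_le_two_mul_sub_add (f : ℂ → ℂ) (hg : ContinuousOn g {w | 0 < w.re}) :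
    H2normSq f ≤ 2 * H2normSq (f - g) + 2 * H2normSq g := by
  refine H2normSq_le_iff.2 fun x hx => ?_
  have hg_meas : Measurable fun y : ℝ => 2 * ‖g (x + y * I)‖ₑ ^ 2 :=
    ((continuous_comp_verticalLine hg hx).measurable.enorm.pow_const 2).const_mul 2
  calc lineNormSq f x
      ≤ ∫⁻ y : ℝ, 2 * ‖(f - g) (x + y * I)‖ₑ ^ 2 + 2 * ‖g (x + y * I)‖ₑ ^ 2 :=
        lintegral_mono fun y => enorm_sq_le_two_mul_enorm_sub_sq_add _ _
    _ = 2 * lineNormSq (f - g) x + 2 * lineNormSq g x := by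
        rw [lintegral_add_right _ hg_meas, lintegral_const_mul' _ _ (by simp),
          lintegral_const_mul' _ _ (by simp), lineNormSq, lineNormSq]
    _ ≤ 2 * H2normSq (f - g) + 2 * H2normSq g := by
        gcongr <;> exact lineNormSq_le_H2normSq _ hx

lemma lineNormSq_eq_zero_iff (hf : ContinuousOn f {w | 0 < w.re}) (hx : 0 < x) :
    lineNormSq f x = 0 ↔ ∀ y : ℝ, f (x + y * I) = 0 := by
  have hsq : Continuous fun y : ℝ => ‖f (x + y * I)‖ₑ ^ 2 :=
    (ENNReal.continuous_pow 2).comp (continuous_comp_verticalLine hf hx).enorm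
  rw [lineNormSq, lintegral_eq_zero_iff hsq.measurable,
    hsq.ae_eq_iff_eq volume continuous_zero, funext_iff]
  simp

lemma H2normSq_eq_zero_iff (hf : ContinuousOn f {w | 0 < w.re}) :
    H2normSq f = 0 ↔ Set.EqOn f 0 {w | 0 < w.re} := by
  rw [← nonpos_iff_eq_zero, H2normSq_le_iff]
  constructor
  · intro h w hw
    simpa using (lineNormSq_eq_zero_iff hf hw).1 (nonpos_iff_eq_zero.1 (h w.re hw)) w.im
  · intro h x hx
    exact ((lineNormSq_eq_zero_iff hf hx).2 fun y => h (by simpa using hx)).le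

end Norm

section Kernel

lemma add_one_ne_zero_of_re_pos {w : ℂ} (hw : 0 < w.re) : w + 1 ≠ 0 := by
  intro h
  have : w.re + 1 = 0 := by simpa using congrArg re h
  linarith

lemma differentiableOn_inv_add_one :
    DifferentiableOn ℂ (fun w : ℂ => (w + 1)⁻¹) {w | 0 < w.re} :=
  (differentiableOn_id.add_const 1).inv fun _ => add_one_ne_zero_of_re_pos

lemma enorm_inv_add_one_sq_le {x : ℝ} (hx : 0 < x) (y : ℝ) :
    ‖((x : ℂ) + y * I + 1)⁻¹‖ₑ ^ 2 ≤ ENNReal.ofReal (1 + y ^ 2)⁻¹ := by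
  rw [← ofReal_norm, ← ENNReal.ofReal_pow (norm_nonneg _), norm_inv, inv_pow,
    ← normSq_eq_norm_sq, normSq_apply]
  refine ENNReal.ofReal_le_ofReal (inv_anti₀ (by positivity) ?_)
  simp only [add_re, add_im, ofReal_re, ofReal_im, re_ofReal_mul, im_ofReal_mul, I_re, I_im,
    one_re, one_im]
  nlinarith

lemma memH2_inv_add_one : MemH2 fun w => (w + 1)⁻¹ := by
  refine ⟨differentiableOn_inv_add_one, ?_⟩
  calc H2normSq (fun w => (w + 1)⁻¹)
      ≤ ∫⁻ y : ℝ, ENNReal.ofReal (1 + y ^ 2)⁻¹ :=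
        H2normSq_le_iff.2 fun _ hx => lintegral_mono (enorm_inv_add_one_sq_le hx)
    _ < ⊤ := integrable_inv_one_add_sq.lintegral_lt_top

lemma H2normSq_inv_add_one_ne_zero : H2normSq (fun w => (w + 1)⁻¹) ≠ 0 := by
  rw [Ne, H2normSq_eq_zero_iff differentiableOn_inv_add_one.continuousOn]
  intro h
  have h1 : ((1 : ℂ) + 1)⁻¹ = 0 := h (by simp : (1 : ℂ) ∈ {w : ℂ | 0 < w.re})
  norm_num at h1

end Kernel

section Density

lemma MemH2.zero : MemH2 0 :=
  ⟨differentiableOn_const 0, by simp [H2normSq]⟩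

lemma MemH2.const_smul {f : ℂ → ℂ} (hf : MemH2 f) (c : ℂ) : MemH2 (c • f) :=
  ⟨hf.1.const_smul c, by
    rw [H2normSq_const_smul]
    exact ENNReal.mul_lt_top (by finiteness) hf.2⟩

lemma exists_memH2_lt_H2normSq {C : ENNReal} (hC : C ≠ ⊤) : ∃ g, MemH2 g ∧ C < H2normSq g := by
  obtain ⟨K, hK⟩ := ENNReal.exists_nat_mul_gt H2normSq_inv_add_one_ne_zero hC
  refine ⟨(K : ℂ) • fun w => (w + 1)⁻¹, memH2_inv_add_one.const_smul _, hK.trans_le ?_⟩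
  have : (K : ENNReal) ≤ ‖(K : ℂ)‖ₑ ^ 2 := by
    rw [enorm_eq_nnnorm, nnnorm_natCast]
    exact_mod_cast Nat.le_self_pow two_ne_zero K
  rw [H2normSq_const_smul]
  gcongr

lemma exists_ofReal_sq_le {δ : ENNReal} (hδ : δ ≠ 0) :
    ∃ ε : ℝ, 0 < ε ∧ ENNReal.ofReal ε ^ 2 ≤ δ := by
  obtain ⟨r, hr, hrδ⟩ := ENNReal.lt_iff_exists_nnreal_btwn.1 (pos_iff_ne_zero.2 hδ)
  refine ⟨NNReal.sqrt r, by simpa using hr, ?_⟩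
  rw [ENNReal.ofReal_coe_nnreal, ← ENNReal.coe_pow, NNReal.sq_sqrt]
  exact hrδ.le

variable {ι : Type*} {F : ι → ℂ → ℂ}

lemma notDenseInH2_of_le_H2normSq {δ : ENNReal} (hδ : δ ≠ 0) (hF : ∀ i, δ ≤ H2normSq (F i)) :
    NotDenseInH2 F := by
  obtain ⟨ε, hε, hεδ⟩ := exists_ofReal_sq_le hδ
  exact ⟨0, .zero, ε, hε, fun i => by
    rw [H2normSq_zero_sub]
    exact hεδ.trans (hF i)⟩

lemma notDenseInH2_of_H2normSq_le {C : ENNReal} (hC : C ≠ ⊤)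
    (hcont : ∀ i, ContinuousOn (F i) {w | 0 < w.re}) (hF : ∀ i, H2normSq (F i) ≤ C) :
    NotDenseInH2 F := by
  obtain ⟨g, hg, hlt⟩ := exists_memH2_lt_H2normSq (C := 2 * 1 + 2 * C) (by finiteness)
  refine ⟨g, hg, 1, one_pos, fun i => ?_⟩
  rw [ENNReal.ofReal_one, one_pow]
  by_contra! hclose
  refine hlt.not_ge ?_
  calc H2normSq g ≤ 2 * H2normSq (g - F i) + 2 * H2normSq (F i) :=
        H2normSq_le_two_mul_sub_add g (hcont i)
    _ ≤ 2 * 1 + 2 * C := by gcongr; exact hF i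

end Density

section Affine

variable {a : ℝ} {b p : ℂ} {f : ℂ → ℂ}

lemma lintegral_comp_const_mul (ha : a ≠ 0) (F : ℝ → ENNReal) :
    ∫⁻ y, F (a * y) = ENNReal.ofReal |a⁻¹| * ∫⁻ y, F y := by
  have hemb : MeasurableEmbedding (a * · : ℝ → ℝ) :=
    (Homeomorph.mulLeft₀ a ha).measurableEmbedding
  rw [← hemb.lintegral_map F, Real.map_volume_mul_left ha, lintegral_smul_measure, smul_eq_mul]

lemma lineNormSq_comp_const_mul (ha : 0 < a) (f : ℂ → ℂ) (x : ℝ) :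
    lineNormSq (f ∘ (a * ·)) x = ENNReal.ofReal a⁻¹ * lineNormSq f (a * x) := by
  rw [lineNormSq, lineNormSq, ← abs_of_pos (inv_pos.2 ha), ← lintegral_comp_const_mul ha.ne']
  simp only [Function.comp_apply, ofReal_mul, mul_add, mul_assoc]

lemma lineNormSq_comp_add_const (f : ℂ → ℂ) (p : ℂ) (x : ℝ) :
    lineNormSq (f ∘ (· + p)) x = lineNormSq f (x + p.re) := by
  rw [lineNormSq, lineNormSq,
    ← lintegral_add_right_eq_self (fun y : ℝ => ‖f ((x + p.re : ℝ) + y * I)‖ₑ ^ 2) p.im]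
  refine lintegral_congr fun y => ?_
  have : (x : ℂ) + y * I + p = (x + p.re : ℝ) + (y + p.im : ℝ) * I := by
    apply Complex.ext <;> simp
  rw [Function.comp_apply, this]

lemma H2normSq_comp_const_mul (ha : 0 < a) (f : ℂ → ℂ) :
    H2normSq (f ∘ (a * ·)) = ENNReal.ofReal a⁻¹ * H2normSq f := by
  refine le_antisymm (H2normSq_le_iff.2 fun x hx => ?_) ?_
  · rw [lineNormSq_comp_const_mul ha]
    gcongr
    exact lineNormSq_le_H2normSq f (by positivity)
  · change ENNReal.ofReal a⁻¹ * ⨆ x ∈ Set.Ioi (0 : ℝ), lineNormSq f x ≤ _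
    simp only [ENNReal.mul_iSup]
    refine iSup₂_le fun x (hx : 0 < x) => ?_
    calc ENNReal.ofReal a⁻¹ * lineNormSq f x = lineNormSq (f ∘ (a * ·)) (x / a) := by
          rw [lineNormSq_comp_const_mul ha, mul_div_cancel₀ x ha.ne']
      _ ≤ H2normSq (f ∘ (a * ·)) := lineNormSq_le_H2normSq _ (by positivity)

lemma H2normSq_comp_add_const_le (hp : 0 ≤ p.re) (f : ℂ → ℂ) :
    H2normSq (f ∘ (· + p)) ≤ H2normSq f := by
  refine H2normSq_le_iff.2 fun x hx => ?_
  rw [lineNormSq_comp_add_const]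
  exact lineNormSq_le_H2normSq f (by positivity)

lemma H2normSq_comp_affine_le (ha : 0 < a) (hb : 0 ≤ b.re) (f : ℂ → ℂ) :
    H2normSq (f ∘ fun w => a * w + b) ≤ ENNReal.ofReal a⁻¹ * H2normSq f :=
  calc H2normSq (f ∘ fun w => a * w + b)
      = ENNReal.ofReal a⁻¹ * H2normSq (f ∘ (· + b)) := H2normSq_comp_const_mul ha (f ∘ (· + b))
    _ ≤ ENNReal.ofReal a⁻¹ * H2normSq f := by gcongr; exact H2normSq_comp_add_const_le hb f

lemma H2normSq_comp_affine_iterate_le (ha : 0 < a) (hb : 0 ≤ b.re) (f : ℂ → ℂ) (n : ℕ) :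
    H2normSq (f ∘ (fun w => a * w + b)^[n]) ≤ ENNReal.ofReal a⁻¹ ^ n * H2normSq f := by
  induction n with
  | zero => simp
  | succ n ih =>
    rw [Function.iterate_succ, ← Function.comp_assoc, pow_succ', mul_assoc]
    exact (H2normSq_comp_affine_le ha hb _).trans (by gcongr)

lemma mapsTo_affine_rightHalfPlane (ha : 0 < a) (hb : 0 ≤ b.re) :
    Set.MapsTo (fun w : ℂ => a * w + b) {w | 0 < w.re} {w | 0 < w.re} := by
  intro w (hw : 0 < w.re)
  simp only [Set.mem_ofPred_eq, add_re, re_ofReal_mul]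
  positivity

lemma continuousOn_comp_affine_iterate (ha : 0 < a) (hb : 0 ≤ b.re)
    (hf : ContinuousOn f {w | 0 < w.re}) (n : ℕ) :
    ContinuousOn (f ∘ (fun w => a * w + b)^[n]) {w | 0 < w.re} :=
  hf.comp (Continuous.iterate (by fun_prop) n).continuousOn
    ((mapsTo_affine_rightHalfPlane ha hb).iterate n)

lemma comp_affine_iterate_comp_add_const (hp : a * p + b = p) (f : ℂ → ℂ) (n : ℕ) :
    f ∘ (fun w => a * w + b)^[n] ∘ (· + p) = (f ∘ (· + p)) ∘ (((a ^ n : ℝ) : ℂ) * ·) := by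
  have hconj : Function.Semiconj (· + p) (fun w => a * w) (fun w => a * w + b) := fun w => by
    linear_combination -hp
  have := (hconj.iterate_right n).comp_eq
  rw [mul_left_iterate, ← ofReal_pow] at this
  rw [← this, Function.comp_assoc]

lemma H2normSq_comp_add_const_le_comp_affine_iterate (ha : 0 < a) (ha1 : a ≤ 1) (hp0 : 0 ≤ p.re)
    (hp : a * p + b = p) (f : ℂ → ℂ) (n : ℕ) :
    H2normSq (f ∘ (· + p)) ≤ H2normSq (f ∘ (fun w => a * w + b)^[n]) := by
  have hone : 1 ≤ ENNReal.ofReal (a ^ n)⁻¹ := by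
    simpa using (one_le_inv₀ (pow_pos ha n)).2 (pow_le_one₀ ha.le ha1)
  calc H2normSq (f ∘ (· + p))
      ≤ ENNReal.ofReal (a ^ n)⁻¹ * H2normSq (f ∘ (· + p)) := le_mul_of_one_le_left' hone
    _ = H2normSq ((f ∘ (fun w => a * w + b)^[n]) ∘ (· + p)) := by
        rw [← H2normSq_comp_const_mul (pow_pos ha n), ← comp_affine_iterate_comp_add_const hp,
          Function.comp_assoc]
    _ ≤ H2normSq (f ∘ (fun w => a * w + b)^[n]) := H2normSq_comp_add_const_le hp0 _

lemma eqOn_zero_of_eqOn_zero_of_lt_re (hf : DifferentiableOn ℂ f {w | 0 < w.re}) {c : ℝ}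
    (hc : Set.EqOn f 0 {w | c < w.re}) : Set.EqOn f 0 {w | 0 < w.re} := by
  have hopen (t : ℝ) : IsOpen {w : ℂ | t < w.re} := isOpen_lt continuous_const continuous_re
  obtain ⟨t, ht⟩ := exists_gt (max 0 c)
  obtain ⟨ht0, htc⟩ := max_lt_iff.1 ht
  exact (hf.analyticOnNhd (hopen 0)).eqOn_zero_of_preconnected_of_eventuallyEq_zero
    (convex_halfSpace_re_gt 0).isPreconnected (z₀ := (t : ℂ)) ht0
    (hc.eventuallyEq_of_mem ((hopen c).mem_nhds htc))

lemma H2normSq_eq_zero_of_comp_add_const (hf : DifferentiableOn ℂ f {w | 0 < w.re})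
    (hp : 0 ≤ p.re) (h : H2normSq (f ∘ (· + p)) = 0) : H2normSq f = 0 := by
  have hmaps : Set.MapsTo (· + p) {w : ℂ | 0 < w.re} {w | 0 < w.re} :=
    fun _ hw => add_pos_of_pos_of_nonneg hw hp
  have hcont := hf.continuousOn.comp (by fun_prop) hmaps
  have hvanish : Set.EqOn f 0 {w | p.re < w.re} := fun w (hw : p.re < w.re) => by
    simpa using (H2normSq_eq_zero_iff hcont).1 h (x := w - p) (by simpa using hw)
  exact (H2normSq_eq_zero_iff hf.continuousOn).2 (eqOn_zero_of_eqOn_zero_of_lt_re hf hvanish)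

lemma exists_affine_fixedPoint_re_nonneg (ha : a < 1) (hb : 0 ≤ b.re) :
    ∃ p : ℂ, 0 ≤ p.re ∧ a * p + b = p := by
  have h1a : 0 < 1 - a := sub_pos.2 ha
  have hne : (1 : ℂ) - a ≠ 0 := by exact_mod_cast h1a.ne'
  refine ⟨b / (1 - a : ℝ), ?_, ?_⟩
  · rw [div_ofReal_re]
    positivity
  · push_cast
    field_simp
    ring

lemma notDenseInH2_affine_orbit_of_one_le (ha : 1 ≤ a) (hb : 0 ≤ b.re) (hf : MemH2 f) :
    NotDenseInH2 fun n : ℕ => f ∘ (fun w => a * w + b)^[n] := by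
  have ha0 : 0 < a := by positivity
  refine notDenseInH2_of_H2normSq_le hf.2.ne
    (continuousOn_comp_affine_iterate ha0 hb hf.1.continuousOn) fun n => ?_
  refine (H2normSq_comp_affine_iterate_le ha0 hb f n).trans (mul_le_of_le_one_left' ?_)
  exact pow_le_one' (by simpa using inv_le_one_of_one_le₀ ha) n

lemma notDenseInH2_affine_orbit_of_lt_one (ha : 0 < a) (ha1 : a < 1) (hb : 0 ≤ b.re)
    (hf : DifferentiableOn ℂ f {w | 0 < w.re}) :
    NotDenseInH2 fun n : ℕ => f ∘ (fun w => a * w + b)^[n] := by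
  obtain ⟨p, hp0, hp⟩ := exists_affine_fixedPoint_re_nonneg ha1 hb
  by_cases h0 : H2normSq (f ∘ (· + p)) = 0
  · refine notDenseInH2_of_H2normSq_le ENNReal.zero_ne_top
      (continuousOn_comp_affine_iterate ha hb hf.continuousOn) fun n => ?_
    simpa [H2normSq_eq_zero_of_comp_add_const hf hp0 h0] using
      H2normSq_comp_affine_iterate_le ha hb f n
  · exact notDenseInH2_of_le_H2normSq h0
      (H2normSq_comp_add_const_le_comp_affine_iterate ha ha1.le hp0 hp f)

end Affine

/-- No affine composition operator on `H²(ℂ₊)` is hypercyclic: no `f ∈ H²(ℂ₊)`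
has dense orbit `{f ∘ φ^[n] : n ∈ ℕ}`. -/
theorem not_hypercyclic (a : ℝ) (ha : 0 < a) (b : ℂ) (hb : 0 ≤ b.re)
    (φ : ℂ → ℂ) (hφ : ∀ w, φ w = (a : ℂ) * w + b)
    (f : ℂ → ℂ) (hf : MemH2 f) :
    ∃ g : ℂ → ℂ, MemH2 g ∧ ∃ ε : ℝ, 0 < ε ∧
      ∀ n : ℕ, ENNReal.ofReal ε ^ 2 ≤ H2normSq (g - f ∘ φ^[n]) := by
  obtain rfl : φ = fun w => a * w + b := funext hφ
  rcases le_or_gt 1 a with h1 | h1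
  · exact notDenseInH2_affine_orbit_of_one_le h1 hb hf
  · exact notDenseInH2_affine_orbit_of_lt_one ha h1 hb hf.1
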